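/- Let T ≥ 1 be such that σ(T) ≥ 0, m⁺(T) > 0 and m⁻(T) > 0, and assume Hypothesis (H4). Then σ(T) ≤ η₁(T) ≤ C₃·T^{1/3} + σ(T) and σ(T) ≤ η₂(T) ≤ C₃·T^{1/3} + σ(T). -/

import Mathlib

open MeasureTheory Real Filter Set

/-- `Z²(t) = |ζ(1/2 + it)|²`. -/
noncomputable def Z2 (t : ℝ) : ℝ := ‖riemannZeta (1/2 + t * Complex.I)‖^2

/-- `Z⁴(t) = |ζ(1/2 + it)|⁴`. -/
noncomputable def Z4 (t : ℝ) : ℝ := ‖riemannZeta (1/2 + t * Complex.I)‖^4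

/-- `σ(T)`, the main part of the mean value of `Z²`, built from a Jacob's ladder `φ`. -/
noncomputable def sigmaT (φ : ℝ → ℝ) (c c₀ T : ℝ) : ℝ :=
  (φ T / (2*T)) * Real.log (φ T / 2) + (c - Real.log (2*π)) * (φ T / (2*T)) + c₀ / T

/-- `S⁺(T) = {t ∈ [0,T] : Z²(t) ≥ σ(T)}`. -/
noncomputable def Splus (φ : ℝ → ℝ) (c c₀ T : ℝ) : Set ℝ :=
  {t ∈ Set.Icc (0:ℝ) T | sigmaT φ c c₀ T ≤ Z2 t}

/-- `S⁻(T) = {t ∈ [0,T] : Z²(t) < σ(T)}`. -/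
noncomputable def Sminus (φ : ℝ → ℝ) (c c₀ T : ℝ) : Set ℝ :=
  {t ∈ Set.Icc (0:ℝ) T | Z2 t < sigmaT φ c c₀ T}

/-- `m⁺(T) = ∫_{S⁺(T)} (Z²(t) − σ(T)) dt`. -/
noncomputable def mplus (φ : ℝ → ℝ) (c c₀ T : ℝ) : ℝ :=
  ∫ t in Splus φ c c₀ T, (Z2 t - sigmaT φ c c₀ T)

/-- `m⁻(T) = ∫_{S⁻(T)} (σ(T) − Z²(t)) dt`. -/
noncomputable def mminus (φ : ℝ → ℝ) (c c₀ T : ℝ) : ℝ :=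
  ∫ t in Sminus φ c c₀ T, (sigmaT φ c c₀ T - Z2 t)

/-- `η₁(T)`, the mean value of `Z² + σ(T)` on `S⁺(T)` weighted by `Z² − σ(T)`. -/
noncomputable def eta1 (φ : ℝ → ℝ) (c c₀ T : ℝ) : ℝ :=
  (∫ t in Splus φ c c₀ T, (Z4 t - (sigmaT φ c c₀ T)^2)) / mplus φ c c₀ T

/-- `η₂(T)`, the mean value of `Z² + σ(T)` on `S⁻(T)` weighted by `σ(T) − Z²`. -/
noncomputable def eta2 (φ : ℝ → ℝ) (c c₀ T : ℝ) : ℝ :=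
  (∫ t in Sminus φ c c₀ T, ((sigmaT φ c c₀ T)^2 - Z4 t)) / mminus φ c c₀ T

/-!
Since `Z⁴ - σ² = (Z² - σ)(Z² + σ)`, both `η₁` and `η₂` are weighted means of `Z² + σ`, with weights
`|Z² - σ|` on `S⁺` and `S⁻`, so they lie between `σ` and `sup Z² + σ`. For `t ≥ 1` the bound
`Z²(t) ≤ C₃ T^{1/3}` is (H4) and monotonicity. For `t ≤ 1`, where (H4) says nothing about `Z²(t)`,
it suffices that `Z²(t) ≤ C₃`, and a lower bound for `C₃` comes from (H4) at the single ordinate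
`t₀ = 10π / log 2 ≈ 45.3`: by Euler–Maclaurin, `|ζ(1/2 + it)| ≤ 1.4735` on `[0, 1]` while
`|ζ(1/2 + it₀)| ≥ 2.79`, and `2.79² > 1.4735² t₀^{1/3}`.
-/

section WeightedMean

theorem integral_mul_div_integral_mem_Icc {α : Type*} [MeasurableSpace α] {μ : Measure α}
    {w g : α → ℝ} {a b : ℝ} (hw : 0 ≤ᵐ[μ] w) (hw_pos : 0 < ∫ x, w x ∂μ)
    (hg_meas : AEStronglyMeasurable g μ) (hg : ∀ᵐ x ∂μ, g x ∈ Icc a b) :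
    (∫ x, w x * g x ∂μ) / ∫ x, w x ∂μ ∈ Icc a b := by
  have hint : Integrable w μ := Integrable.of_integral_ne_zero hw_pos.ne'
  have hbound : ∀ᵐ x ∂μ, ‖g x‖ ≤ max |a| |b| :=
    hg.mono fun x hx ↦ abs_le_max_abs_abs hx.1 hx.2
  have hint_mul : Integrable (fun x ↦ w x * g x) μ := hint.mul_bdd hg_meas hbound
  rw [mem_Icc, le_div_iff₀ hw_pos, div_le_iff₀ hw_pos, ← integral_const_mul, ← integral_const_mul]
  constructor
  · refine integral_mono_ae (hint.const_mul a) hint_mul ?_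
    filter_upwards [hw, hg] with x hwx hgx
    rw [mul_comm]
    exact mul_le_mul_of_nonneg_left hgx.1 hwx
  · refine integral_mono_ae hint_mul (hint.const_mul b) ?_
    filter_upwards [hw, hg] with x hwx hgx
    rw [mul_comm b]
    exact mul_le_mul_of_nonneg_left hgx.2 hwx

end WeightedMean

section CorrectedTrapezoid

variable {E : Type*} [NormedAddCommGroup E] [NormedSpace ℝ E] [CompleteSpace E]
  {f : ℕ → ℝ → E} {a b : ℝ}

-- Four integrations by parts against the successive derivatives of `(x - a)² (b - x)² / 24`.
theorem integral_eq_corrected_trapezoid_add_integral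
    (hf : ∀ j < 4, ∀ x ∈ uIcc a b, HasDerivAt (f j) (f (j + 1) x) x)
    (hint : IntervalIntegrable (f 4) volume a b) :
    ∫ x in a..b, f 0 x = ((b - a) / 2) • (f 0 a + f 0 b) - ((b - a) ^ 2 / 12) • (f 1 b - f 1 a)
      + ∫ x in a..b, ((x - a) ^ 2 * (b - x) ^ 2 / 24) • f 4 x := by
  have hderiv : ∀ x ∈ uIcc a b, HasDerivAt
      (fun y ↦ ((y - a) ^ 2 * (b - y) ^ 2 / 24) • f 3 y
        - ((y - a) * (b - y) * (a + b - 2 * y) / 12) • f 2 y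
        + (((b - y) ^ 2 - 4 * (y - a) * (b - y) + (y - a) ^ 2) / 12) • f 1 y
        - ((2 * y - a - b) / 2) • f 0 y)
      (((x - a) ^ 2 * (b - x) ^ 2 / 24) • f 4 x - f 0 x) x := by
    intro x hx
    have hl : HasDerivAt (fun y ↦ y - a) 1 x := (hasDerivAt_id x).sub_const a
    have hr : HasDerivAt (fun y ↦ b - y) (-1) x := (hasDerivAt_id x).const_sub b
    have hm : HasDerivAt (fun y ↦ 2 * y) 2 x := by simpa using (hasDerivAt_id x).const_mul 2
    have h₃ := ((hl.fun_pow 2).fun_mul (hr.fun_pow 2)).div_const 24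
    have h₂ := ((hl.fun_mul hr).fun_mul (hm.const_sub (a + b))).div_const 12
    have h₁ := (((hr.fun_pow 2).fun_sub ((hl.const_mul 4).fun_mul hr)).fun_add
      (hl.fun_pow 2)).div_const 12
    have h₀ := ((hm.sub_const a).sub_const b).div_const 2
    refine ((((h₃.fun_smul (hf 3 (by norm_num) x hx)).fun_sub
      (h₂.fun_smul (hf 2 (by norm_num) x hx))).fun_add
      (h₁.fun_smul (hf 1 (by norm_num) x hx))).fun_sub
      (h₀.fun_smul (hf 0 (by norm_num) x hx))).congr_deriv ?_
    push_cast
    module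
  have hkernel : IntervalIntegrable (fun x ↦ ((x - a) ^ 2 * (b - x) ^ 2 / 24) • f 4 x) volume a b :=
    hint.continuousOn_smul (by fun_prop)
  have hint₀ : IntervalIntegrable (f 0) volume a b :=
    (HasDerivAt.continuousOn (hf 0 (by norm_num))).intervalIntegrable
  have hFTC := intervalIntegral.integral_eq_sub_of_hasDerivAt hderiv (hkernel.sub hint₀)
  rw [intervalIntegral.integral_sub hkernel hint₀, sub_eq_iff_eq_add, ← sub_eq_iff_eq_add'] at hFTC
  rw [← hFTC]
  module

theorem norm_integral_sub_corrected_trapezoid_le (hab : a ≤ b)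
    (hf : ∀ j < 4, ∀ x ∈ uIcc a b, HasDerivAt (f j) (f (j + 1) x) x)
    (hint : IntervalIntegrable (f 4) volume a b) :
    ‖(∫ x in a..b, f 0 x) -
        (((b - a) / 2) • (f 0 a + f 0 b) - ((b - a) ^ 2 / 12) • (f 1 b - f 1 a))‖ ≤
      (b - a) ^ 4 / 384 * ∫ x in a..b, ‖f 4 x‖ := by
  have hkernel : ∀ x ∈ Ioc a b, (x - a) ^ 2 * (b - x) ^ 2 / 24 ≤ (b - a) ^ 4 / 384 := fun x hx ↦ by
    have hprod : (x - a) * (b - x) ≤ ((b - a) / 2) ^ 2 := by nlinarith [sq_nonneg (a + b - 2 * x)]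
    have hnonneg : 0 ≤ (x - a) * (b - x) :=
      mul_nonneg (sub_nonneg.2 hx.1.le) (sub_nonneg.2 hx.2)
    nlinarith [pow_le_pow_left₀ hnonneg hprod 2]
  rw [integral_eq_corrected_trapezoid_add_integral hf hint, add_sub_cancel_left,
    ← intervalIntegral.integral_const_mul]
  refine intervalIntegral.norm_integral_le_of_norm_le hab (ae_of_all _ fun x hx ↦ ?_)
    (hint.norm.const_mul _)
  rw [norm_smul, Real.norm_of_nonneg (by positivity)]
  exact mul_le_mul_of_nonneg_right (hkernel x hx) (norm_nonneg _)

end CorrectedTrapezoid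

section EulerMaclaurin

/-- The Euler–Maclaurin approximation of `ζ(s)` with cutoff `N` and a single Bernoulli correction.
At `s = 1` or `N = 0` the divisions by zero make it meaningless. -/
noncomputable def zetaApprox (N : ℕ) (s : ℂ) : ℂ :=
  ∑ k ∈ Finset.Ico 1 N, (k : ℂ) ^ (-s) + (N : ℂ) ^ (-s) * (1 / 2 + N / (s - 1) + s / (12 * N))

/-- The entire function `(s - 1) * zetaApprox N s`, written without the pole at `s = 1`. -/
noncomputable def zetaApprox₁ (N : ℕ) (s : ℂ) : ℂ :=
  (s - 1) * (∑ k ∈ Finset.Ico 1 N, (k : ℂ) ^ (-s) + (N : ℂ) ^ (-s) / 2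
    + s / 12 * (N : ℂ) ^ (-s - 1)) + (N : ℂ) ^ (1 - s)

/-- The coefficient of the Euler–Maclaurin error: the kernel bound `1 / 384` times the integral of
the fourth derivative of `x ↦ x ^ (-s)` over `[N, ∞)` is `zetaRemainder s * N ^ (-(re s + 3))`. -/
noncomputable def zetaRemainder (s : ℂ) : ℝ :=
  ‖s‖ * ‖s + 1‖ * ‖s + 2‖ * ‖s + 3‖ / (384 * (s.re + 3))

variable {s : ℂ} {N : ℕ}

theorem sub_one_mul_zetaApprox (hs : s ≠ 1) (hN : 0 < N) :
    (s - 1) * zetaApprox N s = zetaApprox₁ N s := by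
  have hN' : (N : ℂ) ≠ 0 := Nat.cast_ne_zero.2 hN.ne'
  have hs' : s - 1 ≠ 0 := sub_ne_zero.2 hs
  have hpred : (N : ℂ) ^ (-s - 1) = (N : ℂ) ^ (-s) / N := by
    rw [Complex.cpow_sub _ _ hN', Complex.cpow_one]
  have hsucc : (N : ℂ) ^ (1 - s) = N * (N : ℂ) ^ (-s) := by
    rw [sub_eq_add_neg, Complex.cpow_add _ _ hN', Complex.cpow_one]
  rw [zetaApprox, zetaApprox₁, hpred, hsucc]
  field_simp
  ring

theorem differentiable_zetaApprox₁ (hN : 0 < N) : Differentiable ℂ (zetaApprox₁ N) := by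
  have hpow : ∀ k : ℕ, 0 < k → ∀ g : ℂ → ℂ, Differentiable ℂ g →
      Differentiable ℂ fun s ↦ (k : ℂ) ^ g s :=
    fun k hk g hg s ↦ (hg s).const_cpow (Or.inl (Nat.cast_ne_zero.2 hk.ne'))
  have hsum : Differentiable ℂ fun s : ℂ ↦ ∑ k ∈ Finset.Ico 1 N, (k : ℂ) ^ (-s) :=
    Differentiable.fun_sum fun k hk ↦ hpow k (Finset.mem_Ico.1 hk).1 _ (by fun_prop)
  have hneg := hpow N hN (fun s ↦ -s) (by fun_prop)
  have hpred := hpow N hN (fun s ↦ -s - 1) (by fun_prop)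
  have hsucc := hpow N hN (fun s ↦ 1 - s) (by fun_prop)
  unfold zetaApprox₁
  fun_prop

theorem hasDerivAt_prod_mul_ofReal_cpow (hs : 0 < s.re) (j : ℕ) {x : ℝ} (hx : x ≠ 0) :
    HasDerivAt (fun y : ℝ ↦ (∏ i ∈ Finset.range j, (-s - i)) * (y : ℂ) ^ (-s - j))
      ((∏ i ∈ Finset.range (j + 1), (-s - i)) * (x : ℂ) ^ (-s - (j + 1 : ℕ))) x := by
  have hexp : -s - j ≠ 0 := fun h ↦ by
    have hre := congrArg Complex.re h
    simp only [Complex.sub_re, Complex.neg_re, Complex.natCast_re, Complex.zero_re] at hre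
    linarith [j.cast_nonneg (α := ℝ)]
  refine ((hasDerivAt_ofReal_cpow_const hx hexp).const_mul _).congr_deriv ?_
  rw [Finset.prod_range_succ, Nat.cast_succ, ← sub_sub, mul_assoc]

theorem zetaApprox₁_succ_sub_eq (hN : 0 < N) :
    zetaApprox₁ (N + 1) s - zetaApprox₁ N s = -((s - 1) * ((∫ x in (N : ℝ)..N + 1, (x : ℂ) ^ (-s)) -
      (((N : ℂ) ^ (-s) + (N + 1 : ℂ) ^ (-s)) / 2
        - (-s * (N + 1 : ℂ) ^ (-s - 1) - -s * (N : ℂ) ^ (-s - 1)) / 12))) := by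
  have hint : (1 - s) * ∫ x in (N : ℝ)..N + 1, (x : ℂ) ^ (-s) =
      (N + 1 : ℂ) ^ (1 - s) - (N : ℂ) ^ (1 - s) := by
    rcases eq_or_ne s 1 with rfl | hs1
    · simp
    have hzero : (0 : ℝ) ∉ uIcc (N : ℝ) (N + 1) := by
      rw [uIcc_of_le (by linarith)]
      exact fun h ↦ (Nat.cast_pos.2 hN).not_ge h.1
    rw [integral_cpow (Or.inr ⟨fun h ↦ hs1 (neg_injective h), hzero⟩), neg_add_eq_sub,
      mul_div_cancel₀ _ (sub_ne_zero.2 hs1.symm)]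
    push_cast
    rfl
  rw [zetaApprox₁, zetaApprox₁, Finset.sum_Ico_succ_top hN, Nat.cast_succ]
  linear_combination -hint

theorem integral_norm_prod_mul_ofReal_cpow (hs : 0 < s.re) {a b : ℝ} (ha : 0 < a) (hab : a ≤ b) :
    ∫ x in a..b, ‖(∏ i ∈ Finset.range 4, (-s - i)) * (x : ℂ) ^ (-s - (4 : ℕ))‖ =
      384 * zetaRemainder s * (a ^ (-(s.re + 3)) - b ^ (-(s.re + 3))) := by
  have hpos : ∀ x ∈ uIcc a b, 0 < x := fun x hx ↦ ha.trans_le (uIcc_of_le hab ▸ hx).1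
  have hnorm : ∀ x ∈ uIcc a b,
      ‖(∏ i ∈ Finset.range 4, (-s - i)) * (x : ℂ) ^ (-s - (4 : ℕ))‖ =
        ‖s‖ * ‖s + 1‖ * ‖s + 2‖ * ‖s + 3‖ * x ^ (-s.re - 4) := fun x hx ↦ by
    have hneg : ∀ i : ℕ, ‖-s - i‖ = ‖s + i‖ := fun i ↦ by rw [← norm_neg]; congr 1; ring
    rw [norm_mul, norm_prod, Complex.norm_cpow_eq_rpow_re_of_pos (hpos x hx)]
    simp [Finset.prod_range_succ, hneg]
  have hzero : (0 : ℝ) ∉ uIcc a b := fun h ↦ (hpos 0 h).false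
  have hre : s.re + 3 ≠ 0 := by linarith
  rw [intervalIntegral.integral_congr hnorm, intervalIntegral.integral_const_mul,
    integral_rpow (Or.inr ⟨by linarith, hzero⟩), show -s.re - 4 + 1 = -(s.re + 3) by ring,
    zetaRemainder]
  field_simp
  ring

theorem norm_zetaApprox₁_succ_sub_le (hs : 0 < s.re) (hN : 0 < N) :
    ‖zetaApprox₁ (N + 1) s - zetaApprox₁ N s‖ ≤ ‖s - 1‖ * zetaRemainder s *
      ((N : ℝ) ^ (-(s.re + 3)) - (N + 1 : ℝ) ^ (-(s.re + 3))) := by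
  have hle : (N : ℝ) ≤ N + 1 := by linarith
  have hderiv : ∀ j : ℕ, ∀ x ∈ uIcc (N : ℝ) (N + 1), _ := fun j x hx ↦
    hasDerivAt_prod_mul_ofReal_cpow hs j
      ((Nat.cast_pos.2 hN).trans_le (uIcc_of_le hle ▸ hx).1).ne'
  have htrapezoid := norm_integral_sub_corrected_trapezoid_le hle (fun j _ ↦ hderiv j)
    (HasDerivAt.continuousOn (hderiv 4)).intervalIntegrable
  rw [integral_norm_prod_mul_ofReal_cpow hs (Nat.cast_pos.2 hN) hle] at htrapezoid
  rw [zetaApprox₁_succ_sub_eq hN, norm_neg, norm_mul, mul_assoc]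
  gcongr
  calc _ = _ := by
        congr 1
        simp only [Finset.range_zero, Finset.range_one, Finset.prod_empty, Finset.prod_singleton,
          CharP.cast_eq_zero, Nat.cast_one, sub_zero, one_mul, add_sub_cancel_left, one_pow,
          Complex.real_smul, Complex.ofReal_natCast]
        push_cast
        ring
    _ ≤ _ := htrapezoid
    _ = _ := by ring

theorem norm_zetaApprox₁_add_sub_le (hs : 0 < s.re) (hN : 0 < N) (k : ℕ) :
    ‖zetaApprox₁ (N + k) s - zetaApprox₁ N s‖ ≤ ‖s - 1‖ * zetaRemainder s *
      ((N : ℝ) ^ (-(s.re + 3)) - (N + k : ℝ) ^ (-(s.re + 3))) := by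
  induction k with
  | zero => simp
  | succ k ih =>
    have hstep := norm_zetaApprox₁_succ_sub_le hs (N := N + k) (by positivity)
    push_cast [add_assoc] at hstep ih ⊢
    linarith [norm_sub_le_norm_sub_add_norm_sub (zetaApprox₁ (N + (k + 1)) s)
      (zetaApprox₁ (N + k) s) (zetaApprox₁ N s)]

theorem tendsto_natCast_cpow_zero {r : ℂ} (hr : r.re < 0) :
    Tendsto (fun n : ℕ ↦ (n : ℂ) ^ r) atTop (nhds 0) := by
  have hnorm : (fun n : ℕ ↦ (n : ℝ) ^ (-(-r.re))) =ᶠ[atTop] fun n ↦ ‖(n : ℂ) ^ r‖ := by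
    filter_upwards [eventually_gt_atTop 0] with n hn
    rw [Complex.norm_natCast_cpow_of_pos hn, neg_neg]
  exact tendsto_zero_iff_norm_tendsto_zero.2 <|
    ((tendsto_rpow_neg_atTop (neg_pos.2 hr)).comp tendsto_natCast_atTop_atTop).congr' hnorm

theorem tendsto_zetaApprox₁_of_one_lt_re (hs : 1 < s.re) :
    Tendsto (fun n ↦ zetaApprox₁ n s) atTop (nhds ((s - 1) * riemannZeta s)) := by
  have hsum : Tendsto (fun n : ℕ ↦ ∑ k ∈ Finset.Ico 1 n, (k : ℂ) ^ (-s)) atTop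
      (nhds (riemannZeta s)) := by
    have hzero : (0 : ℂ) ^ (-s) = 0 :=
      Complex.zero_cpow (neg_ne_zero.2 (Complex.ne_zero_of_one_lt_re hs))
    have htsum := (Complex.summable_one_div_nat_cpow.2 hs).hasSum.tendsto_sum_nat
    rw [← zeta_eq_tsum_one_div_nat_cpow hs] at htsum
    refine htsum.congr' ?_
    filter_upwards [eventually_gt_atTop 0] with n hn
    rw [Finset.range_eq_Ico, Finset.sum_eq_sum_Ico_succ_bot hn]
    simp [← Complex.cpow_neg, hzero]
  have hneg := tendsto_natCast_cpow_zero (r := -s) (by simpa using by linarith)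
  have hpred := tendsto_natCast_cpow_zero (r := -s - 1) (by simpa using by linarith)
  have hsucc := tendsto_natCast_cpow_zero (r := 1 - s) (by simpa using by linarith)
  simpa [zetaApprox₁] using
    (((hsum.add (hneg.div_const 2)).add (hpred.const_mul (s / 12))).const_mul (s - 1)).add hsucc

theorem summableLocallyUniformlyOn_zetaApprox₁_sub :
    SummableLocallyUniformlyOn (fun (n : ℕ) s ↦ zetaApprox₁ (n + 2) s - zetaApprox₁ (n + 1) s)
      {s | 0 < s.re} := by
  refine SummableLocallyUniformlyOn_of_locally_bounded
    (isOpen_lt continuous_const Complex.continuous_re) fun K hK hKc ↦ ?_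
  have hcont : ContinuousOn (fun s : ℂ ↦ ‖s - 1‖ * zetaRemainder s) K := by
    unfold zetaRemainder
    refine ContinuousOn.mul (by fun_prop) (ContinuousOn.div (by fun_prop) (by fun_prop) ?_)
    intro s hs
    have : 0 < s.re := hK hs
    positivity
  obtain ⟨C, hC⟩ := hKc.exists_bound_of_continuousOn hcont
  refine ⟨fun n ↦ C * ((n + 1 : ℕ) : ℝ) ^ (-2 : ℝ),
    ((summable_nat_add_iff 1).2 (Real.summable_nat_rpow.2 (by norm_num))).mul_left C,
    fun n s hs ↦ ?_⟩
  have hre : 0 < s.re := hK hs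
  have hdecay : ((n + 1 : ℕ) : ℝ) ^ (-(s.re + 3)) ≤ ((n + 1 : ℕ) : ℝ) ^ (-2 : ℝ) :=
    rpow_le_rpow_of_exponent_le (by simp) (by linarith)
  have hnonneg : 0 ≤ ((n + 1 : ℕ) + 1 : ℝ) ^ (-(s.re + 3)) := by positivity
  have hC₀ : 0 ≤ C := (norm_nonneg _).trans (hC s hs)
  calc ‖zetaApprox₁ (n + 2) s - zetaApprox₁ (n + 1) s‖
      ≤ ‖s - 1‖ * zetaRemainder s * (((n + 1 : ℕ) : ℝ) ^ (-(s.re + 3))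
          - ((n + 1 : ℕ) + 1 : ℝ) ^ (-(s.re + 3))) :=
        norm_zetaApprox₁_succ_sub_le hre n.succ_pos
    _ ≤ C * ((n + 1 : ℕ) : ℝ) ^ (-2 : ℝ) := by
        refine mul_le_mul ((le_abs_self _).trans (hC s hs)) (by linarith) ?_ hC₀
        exact sub_nonneg.2 (rpow_le_rpow_of_nonpos (by positivity) (by linarith) (by linarith))

-- Both sides are analytic on `re s > 0`, and they agree on `re s > 1`.
theorem tendsto_zetaApprox₁ (hs : 0 < s.re) :
    Tendsto (fun n ↦ zetaApprox₁ n s) atTop (nhds (riemannZeta₁ s)) := by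
  let U : Set ℂ := {w | 0 < w.re}
  let G : ℂ → ℂ := fun w ↦
    zetaApprox₁ 1 w + ∑' n : ℕ, (zetaApprox₁ (n + 2) w - zetaApprox₁ (n + 1) w)
  have hU : IsOpen U := isOpen_lt continuous_const Complex.continuous_re
  have hlim : ∀ w ∈ U, Tendsto (fun n ↦ zetaApprox₁ n w) atTop (nhds (G w)) := fun w hw ↦ by
    have htsum := (summableLocallyUniformlyOn_zetaApprox₁_sub.summable hw).hasSum.tendsto_sum_nat
    rw [← tendsto_add_atTop_iff_nat 1]
    simpa [Finset.sum_range_sub fun n ↦ zetaApprox₁ (n + 1) w] using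
      htsum.const_add (zetaApprox₁ 1 w)
  have hG : DifferentiableOn ℂ G U :=
    (differentiable_zetaApprox₁ one_pos).differentiableOn.fun_add <|
      summableLocallyUniformlyOn_zetaApprox₁_sub.differentiableOn hU fun n _ _ ↦
        ((differentiable_zetaApprox₁ (n + 1).succ_pos).sub
          (differentiable_zetaApprox₁ n.succ_pos)).differentiableAt
  have hEq : EqOn G riemannZeta₁ U := by
    refine (hG.analyticOnNhd hU).eqOn_of_preconnected_of_eventuallyEq
      (differentiable_riemannZeta₁.differentiableOn.analyticOnNhd hU)
      (convex_halfSpace_re_gt 0).isPreconnected (z₀ := 2) (by simp [U]) ?_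
    filter_upwards [(isOpen_lt continuous_const Complex.continuous_re).mem_nhds
      (show (1 : ℝ) < (2 : ℂ).re by simp)] with w hw
    have hw₁ : w ≠ 1 := fun h ↦ by simp [h] at hw
    rw [tendsto_nhds_unique (hlim w (one_pos.trans hw)) (tendsto_zetaApprox₁_of_one_lt_re hw),
      riemannZeta_eq_inv_sub_mul hw₁, mul_inv_cancel_left₀ (sub_ne_zero.2 hw₁)]
  exact hEq hs ▸ hlim s hs

theorem norm_riemannZeta_sub_zetaApprox_le (hs : 0 < s.re) (hs₁ : s ≠ 1) (hN : 0 < N) :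
    ‖riemannZeta s - zetaApprox N s‖ ≤ zetaRemainder s * (N : ℝ) ^ (-(s.re + 3)) := by
  have hrem : 0 ≤ zetaRemainder s := by unfold zetaRemainder; positivity
  have hlim : Tendsto (fun k ↦ ‖zetaApprox₁ (N + k) s - zetaApprox₁ N s‖) atTop
      (nhds ‖riemannZeta₁ s - zetaApprox₁ N s‖) := by
    simp_rw [add_comm N]
    exact (((tendsto_add_atTop_iff_nat N).2 (tendsto_zetaApprox₁ hs)).sub_const _).norm
  have hscaled : ‖s - 1‖ * ‖riemannZeta s - zetaApprox N s‖ ≤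
      ‖s - 1‖ * (zetaRemainder s * (N : ℝ) ^ (-(s.re + 3))) := by
    rw [← norm_mul, mul_sub, sub_one_mul_zetaApprox hs₁ hN, riemannZeta_eq_inv_sub_mul hs₁,
      mul_inv_cancel_left₀ (sub_ne_zero.2 hs₁), ← mul_assoc]
    refine le_of_tendsto hlim (Eventually.of_forall fun k ↦
      (norm_zetaApprox₁_add_sub_le hs hN k).trans ?_)
    gcongr
    exact sub_le_self _ (by positivity)
  exact le_of_mul_le_mul_left hscaled (norm_pos_iff.2 (sub_ne_zero.2 hs₁))

end EulerMaclaurin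

section CriticalLine

/-- For `k ≥ 1`, the real part of `k ^ (-(1/2 + it))`, the `k`-th term of the Dirichlet series of
`ζ` on the critical line. -/
noncomputable def criticalTerm (t : ℝ) (k : ℕ) : ℝ := cos (t * log k) / √k

theorem re_natCast_cpow_eq_criticalTerm (t : ℝ) {k : ℕ} (hk : 0 < k) :
    ((k : ℂ) ^ (-(1 / 2 + t * Complex.I))).re = criticalTerm t k := by
  have hk₀ : (0 : ℝ) < k := Nat.cast_pos.2 hk
  have hexp : Complex.log k * -(1 / 2 + t * Complex.I) =
      ((-(log k / 2) : ℝ) : ℂ) + ((-(t * log k) : ℝ) : ℂ) * Complex.I := by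
    rw [← Complex.natCast_log]
    push_cast
    ring
  rw [Complex.cpow_def_of_ne_zero (Nat.cast_ne_zero.2 hk.ne'), hexp, Complex.exp_re]
  simp only [Complex.add_re, Complex.ofReal_re, Complex.re_ofReal_mul, Complex.I_re, mul_zero,
    add_zero, Complex.add_im, Complex.ofReal_im, Complex.im_ofReal_mul, Complex.I_im, mul_one,
    zero_add, cos_neg]
  rw [exp_neg, exp_half, exp_log hk₀, inv_mul_eq_div, criticalTerm]

theorem re_sum_natCast_cpow_eq_sum_criticalTerm (t : ℝ) (N : ℕ) :
    (∑ k ∈ Finset.Ico 1 N, (k : ℂ) ^ (-(1 / 2 + t * Complex.I))).re =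
      ∑ k ∈ Finset.Ico 1 N, criticalTerm t k := by
  rw [Complex.re_sum]
  exact Finset.sum_congr rfl fun k hk ↦
    re_natCast_cpow_eq_criticalTerm t (Finset.mem_Ico.1 hk).1

theorem re_div_half_add_mul_I_sub_one (x t : ℝ) :
    (x / (1 / 2 + t * Complex.I - 1)).re = -(x / 2) / (1 / 4 + t ^ 2) := by
  have hre : (1 / 2 + t * Complex.I - 1).re = -1 / 2 := by norm_num
  have him : (1 / 2 + t * Complex.I - 1).im = t := by simp
  rw [div_eq_mul_inv, Complex.re_ofReal_mul, Complex.inv_re, Complex.normSq_apply, hre, him]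
  ring

theorem half_add_mul_I_ne_one (t : ℝ) : (1 / 2 + t * Complex.I : ℂ) ≠ 1 := fun h ↦ by
  simpa using congrArg Complex.re h

theorem zetaRemainder_half_add_mul_I (t : ℝ) : zetaRemainder (1 / 2 + t * Complex.I) =
    √((1 / 4 + t ^ 2) * (9 / 4 + t ^ 2) * (25 / 4 + t ^ 2) * (49 / 4 + t ^ 2)) / 1344 := by
  have hshift : ∀ x : ℝ, ‖(1 / 2 + t * Complex.I + x : ℂ)‖ = √((1 / 2 + x) ^ 2 + t ^ 2) := by
    intro x
    rw [← Complex.norm_add_mul_I]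
    push_cast
    congr 1
    ring
  have h₀ := hshift 0
  have h₁ := hshift 1
  have h₂ := hshift 2
  have h₃ := hshift 3
  push_cast [add_zero] at h₀ h₁ h₂ h₃
  rw [zetaRemainder, h₀, h₁, h₂, h₃, ← sqrt_mul (by positivity), ← sqrt_mul (by positivity),
    ← sqrt_mul (by positivity)]
  norm_num

theorem zetaRemainder_half_add_mul_I_le {t u c : ℝ} (ht : 0 ≤ t) (htu : t ≤ u) (hc : 0 ≤ c)
    (h : (1 / 4 + u ^ 2) * (9 / 4 + u ^ 2) * (25 / 4 + u ^ 2) * (49 / 4 + u ^ 2) ≤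
      (1344 * c) ^ 2) : zetaRemainder (1 / 2 + t * Complex.I) ≤ c := by
  rw [zetaRemainder_half_add_mul_I, div_le_iff₀' (by norm_num), sqrt_le_left (by positivity)]
  refine le_trans ?_ h
  gcongr

theorem norm_zetaApprox_one_half_add_mul_I_le {t : ℝ} (ht : t ∈ Icc (0 : ℝ) 1) :
    ‖zetaApprox 1 (1 / 2 + t * Complex.I)‖ ≤ 35 / 24 := by
  set s : ℂ := 1 / 2 + t * Complex.I with hs
  have hsub : s - 1 = ((-1 / 2 : ℝ) : ℂ) + (t : ℂ) * Complex.I := by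
    rw [hs]
    push_cast
    ring
  have hscaled : (s - 1) * zetaApprox 1 s =
      ((35 / 48 - t ^ 2 / 12 : ℝ) : ℂ) + ((t / 2 : ℝ) : ℂ) * Complex.I := by
    rw [sub_one_mul_zetaApprox (half_add_mul_I_ne_one t) one_pos, zetaApprox₁]
    simp only [Finset.Ico_self, Finset.sum_empty, Nat.cast_one, Complex.one_cpow]
    push_cast
    linear_combination (t ^ 2 / 12 : ℂ) * Complex.I_sq
  have hnorm := congrArg norm hscaled
  rw [norm_mul, hsub, Complex.norm_add_mul_I, Complex.norm_add_mul_I] at hnorm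
  refine le_of_mul_le_mul_left (a := √((-1 / 2) ^ 2 + t ^ 2)) ?_ (by positivity)
  rw [hnorm, sqrt_le_left (by positivity), mul_pow, sq_sqrt (by positivity)]
  nlinarith [ht.1, ht.2, pow_le_one₀ ht.1 ht.2 (n := 2), sq_nonneg t]

theorem norm_riemannZeta_half_add_mul_I_le {t : ℝ} (ht : t ∈ Icc (0 : ℝ) 1) :
    ‖riemannZeta (1 / 2 + t * Complex.I)‖ ≤ 1.4735 := by
  have hremainder := norm_riemannZeta_sub_zetaApprox_le (by simp) (half_add_mul_I_ne_one t) one_pos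
  rw [Nat.cast_one, one_rpow, mul_one] at hremainder
  have hsmall : zetaRemainder (1 / 2 + t * Complex.I) ≤ 0.015 :=
    zetaRemainder_half_add_mul_I_le ht.1 ht.2 (by norm_num) (by norm_num)
  linarith [norm_le_norm_add_norm_sub' (riemannZeta (1 / 2 + t * Complex.I))
    (zetaApprox 1 (1 / 2 + t * Complex.I)), norm_zetaApprox_one_half_add_mul_I_le ht]

end CriticalLine

section PeakOrdinate

/-- An ordinate at which `|ζ(1/2 + it)|` is large: `2 ^ (-it) = 1`, and the near-coincidences
`3 ^ 5 ≈ 2 ^ 8` and `7 ^ 5 ≈ 2 ^ 14` make `3 ^ (-it)` and `7 ^ (-it)` close to `1` too. -/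
noncomputable def peakOrdinate : ℝ := 10 * π / log 2

theorem peakOrdinate_mem_Icc : peakOrdinate ∈ Icc 45 45.33 := by
  have hlog : 0 < log 2 := log_pos one_lt_two
  rw [peakOrdinate, mem_Icc, le_div_iff₀ hlog, div_le_iff₀ hlog]
  constructor <;> linarith [pi_gt_d4, pi_lt_d4, log_two_gt_d9, log_two_lt_d9]

theorem abs_log_div_le {x y δ : ℝ} (hx : 0 < x) (hy : 0 < y) (hxy : x ≤ (1 + δ) * y)
    (hyx : y ≤ (1 + δ) * x) : |log (x / y)| ≤ δ := by
  have hlog : ∀ {a b : ℝ}, 0 < a → 0 < b → a ≤ (1 + δ) * b → log (a / b) ≤ δ := fun ha hb hab ↦ by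
    have hle := log_le_sub_one_of_pos (div_pos ha hb)
    rw [← div_le_iff₀ hb] at hab
    linarith
  rw [abs_le, neg_le, ← log_inv, inv_div]
  exact ⟨hlog hy hx hyx, hlog hx hy hxy⟩

theorem one_sub_le_cos_peakOrdinate_mul_log {x δ : ℝ} (m : ℕ) (hx : 0 < x)
    (hlower : 2 ^ m ≤ (1 + δ) * x ^ 5) (hupper : x ^ 5 ≤ (1 + δ) * 2 ^ m) :
    1 - 41.1 * δ ^ 2 ≤ cos (peakOrdinate * log x) := by
  have hlog : 0 < log 2 := log_pos one_lt_two
  have hangle : peakOrdinate * log x = 2 * π / log 2 * log (x ^ 5 / 2 ^ m) + m * (2 * π) := by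
    rw [peakOrdinate, log_div (by positivity) (by positivity), log_pow, log_pow]
    field_simp
    push_cast
    ring
  have hδ := abs_log_div_le (by positivity) (by positivity) hupper hlower
  have hfactor : (2 * π / log 2) ^ 2 ≤ 82.2 := by
    have hle : 2 * π / log 2 ≤ 9.0655 := by
      rw [div_le_iff₀ hlog]
      linarith [pi_lt_d4, log_two_gt_d9]
    exact (pow_le_pow_left₀ (by positivity) hle 2).trans (by norm_num)
  have hsq : (2 * π / log 2 * log (x ^ 5 / 2 ^ m)) ^ 2 ≤ 82.2 * δ ^ 2 := by
    rw [mul_pow]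
    exact mul_le_mul hfactor (sq_le_sq' (neg_le_of_abs_le hδ) (le_of_abs_le hδ)) (sq_nonneg _)
      (by norm_num)
  rw [hangle, cos_add_nat_mul_two_pi]
  linarith [one_sub_sq_div_two_le_cos (x := 2 * π / log 2 * log (x ^ 5 / 2 ^ m))]

theorem le_criticalTerm_peakOrdinate (k m : ℕ) (δ q : ℝ) (hk : 0 < k := by norm_num)
    (hlower : 2 ^ m ≤ (1 + δ) * (k : ℝ) ^ 5 := by norm_num)
    (hupper : (k : ℝ) ^ 5 ≤ (1 + δ) * 2 ^ m := by norm_num)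
    (hδ : 41.1 * δ ^ 2 ≤ 1 := by norm_num) (hq : k * q ^ 2 ≤ 1 := by norm_num) :
    (1 - 41.1 * δ ^ 2) * q ≤ criticalTerm peakOrdinate k := by
  have hk₀ : (0 : ℝ) < k := Nat.cast_pos.2 hk
  have hinv : q ≤ 1 / √k := by
    rw [le_div_iff₀ (sqrt_pos.2 hk₀)]
    refine le_of_abs_le ((sq_le_one_iff_abs_le_one _).1 ?_)
    rwa [mul_pow, sq_sqrt hk₀.le, mul_comm]
  rw [criticalTerm, div_eq_mul_one_div]
  calc (1 - 41.1 * δ ^ 2) * q ≤ (1 - 41.1 * δ ^ 2) * (1 / √k) := by gcongr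
    _ ≤ cos (peakOrdinate * log k) * (1 / √k) := by
      gcongr
      exact one_sub_le_cos_peakOrdinate_mul_log m hk₀ hlower hupper

theorem neg_le_criticalTerm (t : ℝ) (k : ℕ) (q : ℝ) (hq₀ : 0 ≤ q := by norm_num)
    (hq : 1 ≤ k * q ^ 2 := by norm_num) : -q ≤ criticalTerm t k := by
  have hsqrt : 1 ≤ q * √k := by
    refine (one_le_sq_iff₀ (by positivity)).1 ?_
    rwa [mul_pow, sq_sqrt k.cast_nonneg, mul_comm]
  have hk : 0 < √k := pos_of_mul_pos_right (one_pos.trans_le hsqrt) hq₀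
  rw [criticalTerm, le_div_iff₀ hk]
  linarith [neg_one_le_cos (t * log k)]

theorem le_sum_criticalTerm_peakOrdinate :
    2.87 ≤ ∑ k ∈ Finset.Ico 1 16, criticalTerm peakOrdinate k := by
  norm_num only [Finset.sum_Ico_succ_top, Finset.Ico_self, Finset.sum_empty]
  linarith [
    le_criticalTerm_peakOrdinate 1 0 0 1,
    le_criticalTerm_peakOrdinate 2 5 0 0.707,
    le_criticalTerm_peakOrdinate 3 8 (13 / 243) 0.577,
    le_criticalTerm_peakOrdinate 4 10 0 0.5,
    neg_le_criticalTerm peakOrdinate 5 0.448,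
    le_criticalTerm_peakOrdinate 6 13 (13 / 243) 0.408,
    le_criticalTerm_peakOrdinate 7 14 (423 / 16384) 0.377,
    le_criticalTerm_peakOrdinate 8 15 0 0.353,
    le_criticalTerm_peakOrdinate 9 16 0.11 0.333,
    neg_le_criticalTerm peakOrdinate 10 0.317,
    neg_le_criticalTerm peakOrdinate 11 0.302,
    le_criticalTerm_peakOrdinate 12 18 (13 / 243) 0.288,
    neg_le_criticalTerm peakOrdinate 13 0.278,
    le_criticalTerm_peakOrdinate 14 19 (423 / 16384) 0.267,
    neg_le_criticalTerm peakOrdinate 15 0.259]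

theorem sixteen_cpow_peakOrdinate :
    (16 : ℂ) ^ (-(1 / 2 + peakOrdinate * Complex.I)) = 1 / 4 := by
  have hlog₂ : (log 2 : ℂ) ≠ 0 := Complex.ofReal_ne_zero.2 (log_pos one_lt_two).ne'
  have hlog : Complex.log 16 = 4 * log 2 := by
    rw [← Nat.cast_ofNat, ← Complex.natCast_log, Nat.cast_ofNat,
      show (16 : ℝ) = 2 ^ 4 by norm_num, log_pow]
    push_cast
    rfl
  have hexp : Complex.log 16 * -(1 / 2 + peakOrdinate * Complex.I) =
      ((-(2 * log 2) : ℝ) : ℂ) - (20 : ℕ) * (2 * π * Complex.I) := by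
    rw [hlog, peakOrdinate]
    push_cast
    field_simp
    ring
  rw [Complex.cpow_def_of_ne_zero (by norm_num), hexp, Complex.exp_periodic.sub_nat_mul_eq,
    ← Complex.ofReal_exp, exp_neg, two_mul, exp_add, exp_log two_pos]
  norm_num

theorem re_zetaApprox_sixteen_peakOrdinate :
    (zetaApprox 16 (1 / 2 + peakOrdinate * Complex.I)).re =
      ∑ k ∈ Finset.Ico 1 16, criticalTerm peakOrdinate k
        + 1 / 4 * (1 / 2 - 8 / (1 / 4 + peakOrdinate ^ 2) + 1 / 384) := by
  have hpole := re_div_half_add_mul_I_sub_one 16 peakOrdinate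
  have hhalf : (1 / 2 : ℂ).re = 1 / 2 := by norm_num
  have hbernoulli : ((1 / 2 + peakOrdinate * Complex.I) / (12 * 16)).re = 1 / 384 := by
    rw [show (12 * 16 : ℂ) = (192 : ℝ) by norm_num, Complex.div_ofReal_re]
    norm_num
  rw [zetaApprox, Complex.add_re, re_sum_natCast_cpow_eq_sum_criticalTerm, Nat.cast_ofNat,
    sixteen_cpow_peakOrdinate, show (1 / 4 : ℂ) = (1 / 4 : ℝ) by norm_num, Complex.re_ofReal_mul,
    Complex.add_re, Complex.add_re, hhalf, hbernoulli, show (16 : ℂ) = (16 : ℝ) by norm_num, hpole]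
  ring

theorem le_re_zetaApprox_sixteen_peakOrdinate :
    2.99 ≤ (zetaApprox 16 (1 / 2 + peakOrdinate * Complex.I)).re := by
  have hpole : 8 / (1 / 4 + peakOrdinate ^ 2) ≤ 0.005 := by
    rw [div_le_iff₀ (by positivity)]
    linarith [pow_le_pow_left₀ (by norm_num) peakOrdinate_mem_Icc.1 2]
  rw [re_zetaApprox_sixteen_peakOrdinate]
  linarith [le_sum_criticalTerm_peakOrdinate]

theorem le_norm_riemannZeta_peakOrdinate :
    2.79 ≤ ‖riemannZeta (1 / 2 + peakOrdinate * Complex.I)‖ := by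
  have hremainder := norm_riemannZeta_sub_zetaApprox_le (N := 16) (by simp)
    (half_add_mul_I_ne_one peakOrdinate) (by norm_num)
  have hsmall : zetaRemainder (1 / 2 + peakOrdinate * Complex.I) ≤ 3200 :=
    zetaRemainder_half_add_mul_I_le (by linarith [peakOrdinate_mem_Icc.1]) peakOrdinate_mem_Icc.2
      (by norm_num) (by norm_num)
  have hpow : ((16 : ℕ) : ℝ) ^ (-((1 / 2 + peakOrdinate * Complex.I).re + 3)) = 1 / 16384 := by
    have hexp : -((1 / 2 + peakOrdinate * Complex.I).re + 3) = -(7 / 2) := by norm_num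
    rw [hexp, show ((16 : ℕ) : ℝ) = 4 ^ (2 : ℝ) by norm_num, ← rpow_mul (by norm_num)]
    norm_num
  have hmain := le_re_zetaApprox_sixteen_peakOrdinate.trans (Complex.re_le_norm _)
  rw [hpow] at hremainder
  linarith [norm_le_norm_add_norm_sub (riemannZeta (1 / 2 + peakOrdinate * Complex.I))
    (zetaApprox 16 (1 / 2 + peakOrdinate * Complex.I))]

end PeakOrdinate

section Eta

theorem Z2_nonneg (t : ℝ) : 0 ≤ Z2 t := sq_nonneg _

theorem Z4_eq_Z2_sq (t : ℝ) : Z4 t = Z2 t ^ 2 := by rw [Z4, Z2, ← pow_mul]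

theorem continuous_Z2 : Continuous Z2 := by
  refine (continuous_iff_continuousAt.2 fun t ↦ ?_).norm.pow 2
  exact (differentiableAt_riemannZeta (half_add_mul_I_ne_one t)).continuousAt.comp
    (f := fun t : ℝ ↦ (1 / 2 + t * Complex.I : ℂ)) (by fun_prop)

theorem Z2_le_of_Z2_peakOrdinate_le {C t : ℝ} (hC : 0 ≤ C)
    (hpeak : Z2 peakOrdinate ≤ C * peakOrdinate ^ (1 / 3 : ℝ)) (ht : t ∈ Icc (0 : ℝ) 1) :
    Z2 t ≤ C := by
  have hroot : peakOrdinate ^ (1 / 3 : ℝ) ≤ 3.566 := by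
    rw [one_div, rpow_inv_le_iff_of_pos (by linarith [peakOrdinate_mem_Icc.1]) (by norm_num)
      (by norm_num)]
    exact peakOrdinate_mem_Icc.2.trans (by norm_num)
  have hlarge : 2.79 ^ 2 ≤ Z2 peakOrdinate :=
    pow_le_pow_left₀ (by norm_num) le_norm_riemannZeta_peakOrdinate 2
  have hsmall : Z2 t ≤ 1.4735 ^ 2 :=
    pow_le_pow_left₀ (norm_nonneg _) (norm_riemannZeta_half_add_mul_I_le ht) 2
  linarith [mul_le_mul_of_nonneg_left hroot hC]

theorem Z2_le_mul_rpow_of_mem_Icc {C T t : ℝ} (hC : 0 ≤ C) (hT : 1 ≤ T)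
    (hH4 : ∀ t ≥ (1 : ℝ), Z2 t ≤ C * t ^ ((1 : ℝ) / 3)) (ht : t ∈ Icc 0 T) :
    Z2 t ≤ C * T ^ ((1 : ℝ) / 3) := by
  rcases le_total t 1 with ht₁ | ht₁
  · have hpeak := hH4 peakOrdinate (by linarith [peakOrdinate_mem_Icc.1])
    exact (Z2_le_of_Z2_peakOrdinate_le hC hpeak ⟨ht.1, ht₁⟩).trans
      (le_mul_of_one_le_right hC (one_le_rpow hT (by norm_num)))
  · refine (hH4 t ht₁).trans ?_
    gcongr
    exact ht.2

variable {φ : ℝ → ℝ} {c c₀ T D : ℝ}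

theorem eta1_mem_Icc (hm : 0 < mplus φ c c₀ T) (hD : ∀ t ∈ Icc 0 T, Z2 t ≤ D) :
    eta1 φ c c₀ T ∈ Icc (sigmaT φ c c₀ T) (D + sigmaT φ c c₀ T) := by
  have hmeas : MeasurableSet (Splus φ c c₀ T) :=
    measurableSet_Icc.inter (measurableSet_le measurable_const continuous_Z2.measurable)
  have hfactor : ∀ t, Z4 t - sigmaT φ c c₀ T ^ 2 =
      (Z2 t - sigmaT φ c c₀ T) * (Z2 t + sigmaT φ c c₀ T) := fun t ↦ by
    rw [Z4_eq_Z2_sq]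
    ring
  simp only [eta1, hfactor]
  exact integral_mul_div_integral_mem_Icc
    (ae_restrict_of_forall_mem hmeas fun t ht ↦ sub_nonneg.2 ht.2) hm
    (continuous_Z2.add continuous_const).aestronglyMeasurable
    (ae_restrict_of_forall_mem hmeas fun t ht ↦
      ⟨le_add_of_nonneg_left (Z2_nonneg t), add_le_add_left (hD t ht.1) _⟩)

theorem eta2_mem_Icc (hm : 0 < mminus φ c c₀ T) (hD : ∀ t ∈ Icc 0 T, Z2 t ≤ D) :
    eta2 φ c c₀ T ∈ Icc (sigmaT φ c c₀ T) (D + sigmaT φ c c₀ T) := by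
  have hmeas : MeasurableSet (Sminus φ c c₀ T) :=
    measurableSet_Icc.inter (measurableSet_lt continuous_Z2.measurable measurable_const)
  have hfactor : ∀ t, sigmaT φ c c₀ T ^ 2 - Z4 t =
      (sigmaT φ c c₀ T - Z2 t) * (Z2 t + sigmaT φ c c₀ T) := fun t ↦ by
    rw [Z4_eq_Z2_sq]
    ring
  simp only [eta2, hfactor]
  exact integral_mul_div_integral_mem_Icc
    (ae_restrict_of_forall_mem hmeas fun t ht ↦ sub_nonneg.2 ht.2.le) hm
    (continuous_Z2.add continuous_const).aestronglyMeasurable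
    (ae_restrict_of_forall_mem hmeas fun t ht ↦
      ⟨le_add_of_nonneg_left (Z2_nonneg t), add_le_add_left (hD t ht.1) _⟩)

end Eta

/-- For `T ≥ 1` with `σ(T) ≥ 0`, `m⁺(T) > 0`, `m⁻(T) > 0`, under hypothesis (H4),
both `η₁(T)` and `η₂(T)` lie between `σ(T)` and `C₃·T^{1/3} + σ(T)`. -/
theorem eta_bounds (φ : ℝ → ℝ) (c c₀ T : ℝ) (hT : 1 ≤ T)
    (hσ : 0 ≤ sigmaT φ c c₀ T)
    (hmp : 0 < mplus φ c c₀ T) (hmm : 0 < mminus φ c c₀ T)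
    (C₃ : ℝ) (hC₃ : 0 < C₃) (hH4 : ∀ t ≥ (1:ℝ), Z2 t ≤ C₃ * t ^ ((1:ℝ)/3)) :
    (sigmaT φ c c₀ T ≤ eta1 φ c c₀ T ∧ eta1 φ c c₀ T ≤ C₃ * T ^ ((1:ℝ)/3) + sigmaT φ c c₀ T) ∧
    (sigmaT φ c c₀ T ≤ eta2 φ c c₀ T ∧ eta2 φ c c₀ T ≤ C₃ * T ^ ((1:ℝ)/3) + sigmaT φ c c₀ T) := by
  have hZ2 : ∀ t ∈ Icc 0 T, Z2 t ≤ C₃ * T ^ ((1:ℝ)/3) := fun _ ht ↦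
    Z2_le_mul_rpow_of_mem_Icc hC₃.le hT hH4 ht
  exact ⟨eta1_mem_Icc hmp hZ2, eta2_mem_Icc hmm hZ2⟩
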